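/- arXiv:2508.09082 — 6 statements merged into one kernel-verified Lean document; each statement's English description precedes it below -/
import Mathlib

section
/- Let d ≥ 4 be even, n = d²/2, and in R = 𝔽₂[x]/(xⁿ−1) set a = 1+x and b = (1+x)·P_{d+1}(x). Then for all j, u, v ∈ R: if (u + j·(1+x), v) ∈ C₁(a,b) \ C₂(a,b), then wt(j) + wt(u) + wt(v) ≥ d. (Hence under the RL syndrome-extraction pattern, whose check-qubit faults propagate to data errors of the form (j·(1+x), 0), the effective distance of the [[d², 2, d]] GB code equals its minimum distance d.) -/
open Polynomial

noncomputable section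

/-- `R2 n` is the ring `𝔽₂[x]/(xⁿ − 1)`. -/
abbrev R2 (n : ℕ) : Type := AdjoinRoot (X ^ n - 1 : (ZMod 2)[X])

/-- The image of `x` in `𝔽₂[x]/(xⁿ − 1)`. -/
def xR (n : ℕ) : R2 n := AdjoinRoot.root _

/-- The quotient map `𝔽₂[x] → 𝔽₂[x]/(xⁿ − 1)`. -/
def mkR (n : ℕ) : (ZMod 2)[X] →+* R2 n := AdjoinRoot.mk _

lemma xR_pow_n (n : ℕ) : xR n ^ n = 1 := by
  have h : (AdjoinRoot.mk (X ^ n - 1 : (ZMod 2)[X])) (X ^ n - 1) = 0 := AdjoinRoot.mk_self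
  rw [map_sub, map_pow, AdjoinRoot.mk_X, map_one, sub_eq_zero] at h
  exact h

/-- The unique representative of degree `< n` of an element of `𝔽₂[x]/(xⁿ − 1)` (junk if `n = 0`). -/
def repP {n : ℕ} (u : R2 n) : (ZMod 2)[X] :=
  if h : n = 0 then 0
  else AdjoinRoot.modByMonicHom (by simpa using monic_X_pow_sub_C (1 : ZMod 2) h) u

/-- The Hamming weight of an element of `𝔽₂[x]/(xⁿ − 1)`: the number of nonzero coefficients
of its degree-`< n` representative. -/
def wt {n : ℕ} (u : R2 n) : ℕ := (repP u).support.card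

/-- Coefficient of the degree-`< n` representative, indexed by `ℤ/n`. -/
def coeffZ {n : ℕ} (u : R2 n) (i : ZMod n) : ZMod 2 := (repP u).coeff i.val

/-- The X-stabilizer space `C₂(a,b) = {(r·a, r·b) : r ∈ R}` of the GB code of `(a,b)`. -/
def C2set (n : ℕ) (a b : R2 n) : Set (R2 n × R2 n) := {p | ∃ r : R2 n, p = (r * a, r * b)}

/-- The space `C₁(a,b) = {(u,v) : u·b + v·a = 0}` of the GB code of `(a,b)`. -/
def C1set (n : ℕ) (a b : R2 n) : Set (R2 n × R2 n) := {p | p.1 * b + p.2 * a = 0}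

/-- The (X-side) minimum distance of the GB code of `(a,b)`. -/
def dGB (n : ℕ) (a b : R2 n) : ℕ :=
  sInf {k | ∃ p ∈ C1set n a b \ C2set n a b, wt p.1 + wt p.2 = k}

/-- `P_m(x) = 1 + x + ⋯ + x^{m−1}` as a polynomial over `𝔽₂`. -/
def PmP (m : ℕ) : (ZMod 2)[X] := ∑ i ∈ Finset.range m, X ^ i

/-- `P_m(x) = 1 + x + ⋯ + x^{m−1}` as an element of `𝔽₂[x]/(xⁿ − 1)`. -/
def PmR (n m : ℕ) : R2 n := ∑ i ∈ Finset.range m, xR n ^ i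

/-- The ring endomorphism of `𝔽₂[x]/(xⁿ − 1)` induced by `x ↦ x^d`. -/
def substHom (n d : ℕ) : R2 n →+* R2 n :=
  AdjoinRoot.lift (algebraMap (ZMod 2) (R2 n)) (xR n ^ d) (by
    simp only [eval₂_sub, eval₂_X_pow, eval₂_one]
    rw [← pow_mul, mul_comm d n, pow_mul, xR_pow_n, one_pow, sub_self])

/-- The Euclidean inner product on `𝔽₂²ⁿ`, in terms of pairs `(u₁, u₂)` of elements of
`𝔽₂[x]/(xⁿ − 1)` (representing the concatenated binary vector `(u₁ | u₂)`). -/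
def eucInner (n : ℕ) (p q : R2 n × R2 n) : ZMod 2 :=
  ∑ i ∈ Finset.range n,
    ((repP p.1).coeff i * (repP q.1).coeff i + (repP p.2).coeff i * (repP q.2).coeff i)

/-- The symplectic inner product of `u₁ + w·u₂` and `v₁ + w·v₂`, i.e.
`Σᵢ (u₁ᵢ·v₂ᵢ + u₂ᵢ·v₁ᵢ)`, in terms of the pairs `(u₁,u₂)`, `(v₁,v₂)`. -/
def sympInner (n : ℕ) (p q : R2 n × R2 n) : ZMod 2 :=
  ∑ i ∈ Finset.range n,
    ((repP p.1).coeff i * (repP q.2).coeff i + (repP p.2).coeff i * (repP q.1).coeff i)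

/-- Euclidean dual of a set of (pairs representing) binary vectors of length `2n`. -/
def eucDual (n : ℕ) (S : Set (R2 n × R2 n)) : Set (R2 n × R2 n) :=
  {p | ∀ q ∈ S, eucInner n q p = 0}

/-- Symplectic dual of a set of (pairs representing) vectors of `𝔽₄ⁿ`. -/
def sympDual (n : ℕ) (S : Set (R2 n × R2 n)) : Set (R2 n × R2 n) :=
  {p | ∀ q ∈ S, sympInner n q p = 0}

/-- Number of nonzero `𝔽₄`-coordinates of `u₁ + w·u₂`, in terms of the pair `(u₁,u₂)`. -/
def wt4 (n : ℕ) (p : R2 n × R2 n) : ℕ := ((repP p.1).support ∪ (repP p.2).support).card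

/-- The `2n` binary coordinates of a pair `(u₁,u₂)`. -/
def coords {n : ℕ} (p : R2 n × R2 n) : (Fin n ⊕ Fin n) → ZMod 2 :=
  Sum.elim (fun i => (repP p.1).coeff i) (fun i => (repP p.2).coeff i)

/-- Vertex set of the Tanner graph: check vertices `x_t` (left) and data vertices
`q_s`, `q'_s` (right). -/
def TV (n : ℕ) : Type := (ZMod n) ⊕ ((ZMod n) ⊕ (ZMod n))

/-- `trel a b v w` holds iff `v` is a check vertex `x_t`, `w` is a data vertex, and they are
connected: `x_t ~ q_s` iff `a_{s−t} = 1`, and `x_t ~ q'_s` iff `b_{s−t} = 1`. -/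
def trel {n : ℕ} (a b : R2 n) (v w : TV n) : Prop :=
  ∃ t s : ZMod n, v = Sum.inl t ∧
    ((w = Sum.inr (Sum.inl s) ∧ coeffZ a (s - t) = 1) ∨
     (w = Sum.inr (Sum.inr s) ∧ coeffZ b (s - t) = 1))

/-- The Tanner graph `T(a,b)` of the GB code of `(a,b)`. -/
def tanner (n : ℕ) (a b : R2 n) : SimpleGraph (TV n) where
  Adj v w := trel a b v w ∨ trel a b w v
  symm := ⟨fun v w h => Or.symm h⟩
  loopless := by
    constructor
    rintro v (⟨t, s, hv, hw⟩ | ⟨t, s, hv, hw⟩) <;>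
      rcases hw with ⟨hw, -⟩ | ⟨hw, -⟩ <;> (subst hv; simp at hw)

end

noncomputable section

lemma two_eq_zero_R2 (n : ℕ) : (2 : R2 n) = 0 := by
  have h : (C 2 : (ZMod 2)[X]) = 0 := by
    rw [show (2 : ZMod 2) = 0 from rfl, C_0]
  rw [← map_zero (mkR n), ← h, C_ofNat, map_ofNat]

lemma mkR_X (n : ℕ) : mkR n X = xR n := AdjoinRoot.mk_X

lemma monic_X_pow_sub_one {n : ℕ} (hn : n ≠ 0) : (X ^ n - 1 : (ZMod 2)[X]).Monic := by
  simpa using monic_X_pow_sub_C (1 : ZMod 2) hn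

lemma repP_mkR {n : ℕ} (hn : n ≠ 0) (p : (ZMod 2)[X]) :
    repP (mkR n p) = p %ₘ (X ^ n - 1) := by
  rw [repP, dif_neg hn]
  exact AdjoinRoot.modByMonicHom_mk _ p

lemma mkR_repP {n : ℕ} (hn : n ≠ 0) (f : R2 n) : mkR n (repP f) = f := by
  rw [repP, dif_neg hn]
  exact AdjoinRoot.mk_leftInverse (monic_X_pow_sub_one hn) f

lemma repP_add {n : ℕ} (f g : R2 n) : repP (f + g) = repP f + repP g := by
  by_cases hn : n = 0
  · simp [repP, hn]
  · simp [repP, hn]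

lemma repP_mkR_of_degree_lt {n : ℕ} (hn : n ≠ 0) {p : (ZMod 2)[X]} (hp : p.degree < n) :
    repP (mkR n p) = p := by
  rw [repP_mkR hn, modByMonic_eq_self_iff (monic_X_pow_sub_one hn)]
  have h := degree_X_pow_sub_C (Nat.pos_of_ne_zero hn) (1 : ZMod 2)
  rw [C_1] at h
  rwa [h]

lemma wt_add_le {n : ℕ} (f g : R2 n) : wt (f + g) ≤ wt f + wt g := by
  rw [wt, repP_add]
  exact (Finset.card_le_card support_add).trans (Finset.card_union_le _ _)

lemma wt_zero (n : ℕ) : wt (0 : R2 n) = 0 := by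
  by_cases hn : n = 0 <;> simp [wt, repP, hn]

lemma wt_sum_le {n : ℕ} {ι : Type*} (s : Finset ι) (f : ι → R2 n) :
    wt (∑ i ∈ s, f i) ≤ ∑ i ∈ s, wt (f i) :=
  Finset.le_sum_of_subadditive wt (wt_zero n).le wt_add_le s f

lemma wt_xR_pow_le {n : ℕ} (hn : n ≠ 0) (k : ℕ) : wt (xR n ^ k) ≤ 1 := by
  have h : xR n ^ k = mkR n (X ^ (k % n)) := by
    rw [map_pow, mkR_X]
    conv_lhs => rw [← Nat.div_add_mod k n, pow_add, pow_mul, xR_pow_n, one_pow, one_mul]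
  rw [h, wt, repP_mkR_of_degree_lt hn]
  · simp
  · rw [degree_X_pow]
    exact_mod_cast Nat.mod_lt k (Nat.pos_of_ne_zero hn)

lemma wt_sum_xR_pow_le {n : ℕ} (hn : n ≠ 0) {ι : Type*} (s : Finset ι) (e : ι → ℕ) :
    wt (∑ i ∈ s, xR n ^ e i) ≤ s.card :=
  (wt_sum_le s _).trans <| (Finset.sum_le_sum fun i _ => wt_xR_pow_le hn (e i)).trans (by simp)

/-- Reduction modulo `xⁿ − 1` does not increase the number of nonzero coefficients. -/
lemma wt_mkR_le {n : ℕ} (hn : n ≠ 0) (p : (ZMod 2)[X]) : wt (mkR n p) ≤ p.support.card := by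
  have hp : p = ∑ i ∈ p.support, X ^ i := by
    conv_lhs => rw [p.as_sum_support_C_mul_X_pow]
    refine Finset.sum_congr rfl fun i hi => ?_
    have h1 : p.coeff i = 1 := by
      have h0 := mem_support_iff.mp hi
      generalize p.coeff i = c at h0
      revert c
      decide
    rw [h1, C_1, one_mul]
  have h : mkR n p = ∑ i ∈ p.support, xR n ^ i := by
    conv_lhs => rw [hp]
    simp [mkR_X]
  rw [h]
  exact wt_sum_xR_pow_le hn _ _

lemma wt_mul_le {n : ℕ} (hn : n ≠ 0) (f g : R2 n) : wt (f * g) ≤ wt f * wt g := by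
  have h : f * g = mkR n (repP f * repP g) := by rw [map_mul, mkR_repP hn, mkR_repP hn]
  rw [h]
  exact (wt_mkR_le hn _).trans card_support_mul_le

lemma coeff_PmP (m i : ℕ) : (PmP m).coeff i = if i < m then 1 else 0 := by
  simp [PmP, coeff_X_pow]

lemma mkR_PmP (n m : ℕ) : mkR n (PmP m) = PmR n m := by
  simp [PmP, PmR, mkR_X]

/-- The all-ones vector has full weight. -/
lemma wt_PmR_self {n : ℕ} (hn : n ≠ 0) : wt (PmR n n) = n := by
  have hdeg : (PmP n).degree < n := by
    rw [degree_lt_iff_coeff_zero]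
    intro i hi
    rw [coeff_PmP, if_neg (by omega)]
  rw [← mkR_PmP, wt, repP_mkR_of_degree_lt hn hdeg]
  have hs : (PmP n).support = Finset.range n := by
    ext i
    simp [coeff_PmP]
  rw [hs, Finset.card_range]

lemma PmR_add (n a b : ℕ) : PmR n (a + b) = PmR n a + xR n ^ a * PmR n b := by
  simp only [PmR, Finset.sum_range_add, Finset.mul_sum, pow_add]

lemma one_add_xR_mul_PmR (n m : ℕ) : (1 + xR n) * PmR n m = 1 + xR n ^ m := by
  have h := mul_neg_geom_sum (xR n) m
  rw [PmR]
  linear_combination h +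
    (xR n * (∑ i ∈ Finset.range m, xR n ^ i) - xR n ^ m) * two_eq_zero_R2 n

/-- `P_m(x) · P_k(x^m) = P_{mk}(x)`. -/
lemma PmR_mul_sum_pow (n m k : ℕ) :
    PmR n m * ∑ i ∈ Finset.range k, (xR n ^ m) ^ i = PmR n (m * k) := by
  induction k with
  | zero => simp [PmR]
  | succ k ih =>
    rw [Finset.sum_range_succ, mul_add, ih, Nat.mul_succ, PmR_add, ← pow_mul]
    ring

lemma PmR_self_mul_xR (n : ℕ) : PmR n n * xR n = PmR n n := by
  have h := one_add_xR_mul_PmR n n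
  rw [xR_pow_n] at h
  linear_combination h + (1 - PmR n n) * two_eq_zero_R2 n

lemma PmR_self_mul_xR_pow (n k : ℕ) : PmR n n * xR n ^ k = PmR n n := by
  induction k with
  | zero => simp
  | succ k ih => rw [pow_succ, ← mul_assoc, ih, PmR_self_mul_xR]

lemma PmR_self_mul_sum_pow (n m k : ℕ) :
    PmR n n * ∑ i ∈ Finset.range k, (xR n ^ m) ^ i = k * PmR n n := by
  simp [Finset.mul_sum, ← pow_mul, PmR_self_mul_xR_pow]

/-- Every element of the ring is congruent to `0` or `1` modulo `1 + x`. -/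
lemma exists_eq_mul_one_add_xR (n : ℕ) (f : R2 n) :
    ∃ r : R2 n, f = r * (1 + xR n) ∨ f = r * (1 + xR n) + 1 := by
  obtain ⟨p, rfl⟩ := AdjoinRoot.mk_surjective f
  have h := congrArg (mkR n) (modByMonic_add_div p (X - C 1))
  rw [modByMonic_X_sub_C_eq_C_eval] at h
  have h2 := two_eq_zero_R2 n
  refine ⟨mkR n (p /ₘ (X - 1)), ?_⟩
  generalize eval 1 p = c at h
  change mkR n p = _ ∨ mkR n p = _
  simp only [map_add, map_mul, map_sub, mkR_X, map_one] at h
  have hc : c = 0 ∨ c = 1 := by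
    clear h
    revert c
    decide
  rcases hc with rfl | rfl
  · left
    rw [C_0, map_zero] at h
    linear_combination -h - mkR n (p /ₘ (X - 1)) * h2
  · right
    rw [C_1, map_one] at h
    linear_combination -h - mkR n (p /ₘ (X - 1)) * h2

/-- The annihilator of `1 + x` consists of zero and the all-ones vector. -/
lemma eq_zero_or_eq_PmR_self {n : ℕ} {f : R2 n} (hf : (1 + xR n) * f = 0) :
    f = 0 ∨ f = PmR n n := by
  obtain ⟨p, rfl⟩ := AdjoinRoot.mk_surjective f
  have h2 := two_eq_zero_R2 n
  have h1 : AdjoinRoot.mk (X ^ n - 1 : (ZMod 2)[X]) ((X - 1) * p) = 0 := by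
    have hx : AdjoinRoot.mk (X ^ n - 1 : (ZMod 2)[X]) X = xR n := mkR_X n
    rw [map_mul, map_sub, hx, map_one]
    linear_combination hf - AdjoinRoot.mk (X ^ n - 1 : (ZMod 2)[X]) p * h2
  rw [AdjoinRoot.mk_eq_zero, ← mul_geom_sum] at h1
  have hX : (X - 1 : (ZMod 2)[X]) ≠ 0 := by simpa using X_sub_C_ne_zero (1 : ZMod 2)
  obtain ⟨q, rfl⟩ := (mul_dvd_mul_iff_left hX).mp h1
  have hq : AdjoinRoot.mk (X ^ n - 1 : (ZMod 2)[X]) ((∑ i ∈ Finset.range n, X ^ i) * q)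
      = PmR n n * mkR n q := by
    rw [← mkR_PmP, ← map_mul]
    rfl
  rw [hq]
  have h0 := one_add_xR_mul_PmR n n
  rw [xR_pow_n] at h0
  obtain ⟨r, hr | hr⟩ := exists_eq_mul_one_add_xR n (mkR n q)
  · left
    rw [hr]
    linear_combination r * h0 + r * h2
  · right
    rw [hr]
    linear_combination r * h0 + r * h2

/-- If `(s, t)` detects `(u + j(1+x), v)` at every cyclic shift, then the weights satisfy a
linear inequality. -/
lemma le_of_mul_add_mul_eq_PmR_self {n : ℕ} (hn : n ≠ 0) {j u v s t : R2 n} {p q : ℕ}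
    (hs : wt s ≤ p) (ht : wt t ≤ q) (hc : wt ((1 + xR n) * s) ≤ 2)
    (h : (u + j * (1 + xR n)) * s + v * t = PmR n n) :
    n ≤ wt u * p + wt v * q + wt j * 2 := by
  have h' : PmR n n = u * s + v * t + j * ((1 + xR n) * s) := by rw [← h]; ring
  calc n = wt (PmR n n) := (wt_PmR_self hn).symm
    _ ≤ wt (u * s) + wt (v * t) + wt (j * ((1 + xR n) * s)) := by
      rw [h']
      exact (wt_add_le _ _).trans (Nat.add_le_add_right (wt_add_le _ _) _)
    _ ≤ wt u * p + wt v * q + wt j * 2 := by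
      gcongr <;> refine (wt_mul_le hn _ _).trans ?_ <;> gcongr

/-- The weight inequality attached to the detector
`(P_p(x), x^c · P_q(x^m))`. -/
lemma le_of_staircase {n : ℕ} (hn : n ≠ 0) {j u v : R2 n} (p q c m : ℕ)
    (h : (u + j * (1 + xR n)) * PmR n p +
      v * (xR n ^ c * ∑ i ∈ Finset.range q, (xR n ^ m) ^ i) = PmR n n) :
    n ≤ wt u * p + wt v * q + wt j * 2 := by
  refine le_of_mul_add_mul_eq_PmR_self hn ?_ ?_ ?_ h
  · simpa [PmR] using wt_sum_xR_pow_le hn (Finset.range p) id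
  · simpa [Finset.mul_sum, pow_add, pow_mul] using
      wt_sum_xR_pow_le hn (Finset.range q) fun i => c + m * i
  · rw [one_add_xR_mul_PmR]
    refine (wt_add_le _ _).trans ?_
    have h0 := wt_xR_pow_le hn 0
    rw [pow_zero] at h0
    have := wt_xR_pow_le hn p
    omega

/-- Value of the pairing of a cycle `(U, U·P_m + ε·P_n)` with a staircase detector. -/
lemma staircase_pairing {n : ℕ} {U v ε : R2 n} (p q c m : ℕ)
    (hv : v = U * PmR n m + ε * PmR n n) :
    U * PmR n p + v * (xR n ^ c * ∑ i ∈ Finset.range q, (xR n ^ m) ^ i) =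
      U * (PmR n p + xR n ^ c * PmR n (m * q)) + ε * q * PmR n n := by
  have h1 := PmR_mul_sum_pow n m q
  have h2 := PmR_self_mul_sum_pow n m q
  have h3 := PmR_self_mul_xR_pow n c
  subst hv
  linear_combination U * xR n ^ c * h1 + ε * xR n ^ c * h2 + ε * q * h3

/-- For the `[[d², 2, d]]` GB code (`d ≥ 4` even, `2n = d²`,
`a = 1+x`, `b = (1+x)·P_{d+1}(x)`): for all `j, u, v ∈ R`, if
`(u + j·(1+x), v) ∈ C₁(a,b) \ C₂(a,b)` then `wt(j) + wt(u) + wt(v) ≥ d`.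
(Hence under the RL syndrome-extraction pattern the effective distance equals `d`.) -/
theorem stmt_14 (d n : ℕ) (hd : Even d) (hd4 : 4 ≤ d) (hn : 2 * n = d ^ 2)
    (a b : R2 n) (ha : a = 1 + xR n) (hb : b = (1 + xR n) * PmR n (d + 1)) :
    ∀ j u v : R2 n, (u + j * (1 + xR n), v) ∈ C1set n a b \ C2set n a b →
      d ≤ wt j + wt u + wt v := by
  intro j u v ⟨h1, h2⟩
  obtain ⟨e, rfl⟩ := hd
  obtain ⟨k, rfl⟩ : ∃ k, e = k + 1 := ⟨e - 1, by omega⟩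
  have hnk : n = 2 * (k + 1) ^ 2 := by nlinarith
  have hn0 : n ≠ 0 := by rw [hnk]; positivity
  have two := two_eq_zero_R2 n
  set m := k + 1 + (k + 1) + 1 with hm
  subst ha hb
  simp only [C1set, C2set, Set.mem_ofPred_eq, Prod.mk.injEq, not_exists] at h1 h2
  -- the three detectors
  have sum₂ : PmR n (k + 1) + xR n ^ 0 * PmR n (m * (k + 1)) = PmR n n := by
    rw [show m * (k + 1) = k + 1 + n by rw [hnk, hm]; ring, PmR_add n (k + 1) n]
    linear_combination PmR n (k + 1) * two + PmR_self_mul_xR_pow n (k + 1)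
  have sum₁ : PmR n (k + 2) + xR n ^ (k + 2) * PmR n (m * k) = PmR n n := by
    rw [← PmR_add, show k + 2 + m * k = n by rw [hnk, hm]; ring]
  have sum₃ : PmR n 1 + xR n ^ 1 * PmR n (m * (2 * k + 1)) = 0 := by
    rw [← PmR_add, show 1 + m * (2 * k + 1) = n + n by rw [hnk, hm]; ring, PmR_add, xR_pow_n]
    linear_combination PmR n n * two
  have ones_annihilates : ∀ r : R2 n, r * (1 + xR n) * PmR n n = 0 := by
    intro r
    have h0 := one_add_xR_mul_PmR n n
    rw [xR_pow_n] at h0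
    linear_combination r * h0 + r * two
  have balanced : n ≤ wt u * (k + 1) + wt v * (k + 1) + wt j * 2 →
      k + 1 + (k + 1) ≤ wt j + wt u + wt v := by
    intro h
    have hk : 1 ≤ k := by omega
    by_contra! hlt
    nlinarith [Nat.zero_le (wt j)]
  obtain ⟨ε, hε, hv⟩ : ∃ ε : R2 n, (ε = 0 ∨ ε = 1) ∧
      v = (u + j * (1 + xR n)) * PmR n m + ε * PmR n n := by
    have h0 : (1 + xR n) * ((u + j * (1 + xR n)) * PmR n m + v) = 0 := by
      linear_combination h1
    rcases eq_zero_or_eq_PmR_self h0 with h | h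
    · exact ⟨0, Or.inl rfl, by linear_combination h - (u + j * (1 + xR n)) * PmR n m * two⟩
    · exact ⟨1, Or.inr rfl, by linear_combination h - (u + j * (1 + xR n)) * PmR n m * two⟩
  have pair₂ := staircase_pairing (k + 1) (k + 1) 0 m hv
  have pair₁ := staircase_pairing (k + 2) k (k + 2) m hv
  have pair₃ := staircase_pairing 1 (2 * k + 1) 1 m hv
  rw [sum₂] at pair₂
  rw [sum₁] at pair₁
  rw [sum₃] at pair₃
  push_cast at pair₁ pair₂ pair₃
  have skew (hε1 : ε = 1)
      (hp : (u + j * (1 + xR n)) * PmR n n + ε * k * PmR n n = PmR n n) :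
      k + 1 + (k + 1) ≤ wt j + wt u + wt v := by
    have i₁ := le_of_staircase hn0 (k + 2) k (k + 2) m (pair₁.trans hp)
    have i₃ := le_of_staircase hn0 1 (2 * k + 1) 1 m (pair₃.trans (by
      rw [hε1]
      linear_combination k * PmR n n * two))
    apply balanced
    have : (k + 1) * n ≤ (k + 1) * (wt u * (k + 1) + wt v * (k + 1) + wt j * 2) := by
      nlinarith [Nat.mul_le_mul_left k i₁]
    exact Nat.le_of_mul_le_mul_left this k.succ_pos
  have straight (hp : (u + j * (1 + xR n)) * PmR n n + ε * (k + 1) * PmR n n = PmR n n) :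
      k + 1 + (k + 1) ≤ wt j + wt u + wt v :=
    balanced (le_of_staircase hn0 (k + 1) (k + 1) 0 m (pair₂.trans hp))
  obtain ⟨r, hr⟩ := exists_eq_mul_one_add_xR n (u + j * (1 + xR n))
  have hk2 : (k : R2 n) = 0 ∨ (k : R2 n) = 1 := by
    obtain ⟨l, rfl⟩ | ⟨l, rfl⟩ := Nat.even_or_odd k
    · exact Or.inl (by push_cast; linear_combination (l : R2 n) * two)
    · exact Or.inr (by push_cast; linear_combination (l : R2 n) * two)
  rcases hε with rfl | rfl
  · rcases hr with hr | hr
    · exact absurd ⟨hr, by rw [hv, hr]; ring⟩ (h2 r)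
    · apply straight
      rw [hr]
      linear_combination ones_annihilates r
  · rcases hr with hr | hr <;> rcases hk2 with hk | hk
    · apply straight
      rw [hr, hk]
      linear_combination ones_annihilates r
    · apply skew rfl
      rw [hr, hk]
      linear_combination ones_annihilates r
    · apply skew rfl
      rw [hr, hk]
      linear_combination ones_annihilates r
    · apply straight
      rw [hr, hk]
      linear_combination ones_annihilates r + PmR n n * two

end
end

section
/- Let n be a positive integer and a, b ∈ R = 𝔽₂[x]/(xⁿ−1) with coefficient sequences a₀,…,a_{n−1} and b₀,…,b_{n−1} (indices modulo n). The Tanner graph T(a,b) has girth equal to 4 if and only if at least one of the following holds: (i) there exist i, j, j' ∈ ℤ_n with i ≢ 0 (mod n) and j ≠ j' such that a_j = a_{j+i} = 1 and a_{j'} = a_{j'+i} = 1; (ii) there exist i, j, j' ∈ ℤ_n with i ≢ 0 (mod n) and j ≠ j' such that b_j = b_{j+i} = 1 and b_{j'} = b_{j'+i} = 1; (iii) there exist i, j, j' ∈ ℤ_n with j ≠ j' such that a_j = b_{j+i} = 1 and a_{j'} = b_{j'+i} = 1. -/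
open Polynomial

/-- A triangle-free graph has girth `4` iff it contains a quadrilateral. -/
lemma SimpleGraph.egirth_eq_four_iff {V : Type*} (G : SimpleGraph V)
    (h : ∀ u v w, G.Adj u v → G.Adj v w → ¬ G.Adj w u) :
    G.egirth = 4 ↔ ∃ x y x' y', x ≠ x' ∧ y ≠ y' ∧
      G.Adj x y ∧ G.Adj x' y ∧ G.Adj x y' ∧ G.Adj x' y' := by
  constructor
  · intro hg
    have hac : ¬ G.IsAcyclic := by
      rw [← egirth_eq_top, hg]
      simp
    obtain ⟨v, w, hw, hl⟩ := exists_egirth_eq_length.2 hac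
    rw [hg] at hl
    have hl : 4 = w.length := by exact_mod_cast hl
    match w, hl with
    | .cons (v := p) h₁ (.cons (v := q) h₂ (.cons (v := r) h₃ (.cons h₄ .nil))), _ =>
      have hs := hw.support_nodup
      simp only [Walk.support_cons, Walk.support_nil, List.tail_cons, List.nodup_cons,
        List.mem_cons, List.not_mem_nil, or_false, not_or] at hs
      exact ⟨v, p, q, r, Ne.symm hs.2.1.2, hs.1.2.1, h₁, h₂.symm, h₄.symm, h₃⟩
  · rintro ⟨x, y, x', y', hx, hy, h₁, h₂, h₃, h₄⟩
    apply le_antisymm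
    · have hc : (Walk.cons h₁ (.cons h₂.symm (.cons h₄ (.cons h₃.symm .nil)))).IsCycle := by
        have := h₁.ne
        have := h₂.ne
        have := h₃.ne
        have := h₄.ne
        simp only [Walk.cons_isCycle_iff, Walk.cons_isPath_iff, Walk.support_cons,
          Walk.support_nil, Walk.edges_cons, Walk.edges_nil, List.mem_cons, List.not_mem_nil,
          Walk.isPath_iff_nil, Walk.nil_nil, Sym2.eq_iff]
        grind
      simpa using egirth_le_length hc
    · rw [le_egirth]
      intro v w hw
      have h3 := hw.three_le_length
      suffices w.length ≠ 3 by exact_mod_cast (show 4 ≤ w.length by omega)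
      intro hl
      match w, hl with
      | .cons h₁ (.cons h₂ (.cons h₃ .nil)), _ => exact h _ _ _ h₁ h₂ h₃

section Tanner

variable {n : ℕ} (a b : R2 n) (t t' s : ZMod n) (d d' : ZMod n ⊕ ZMod n)

lemma tanner_adj_inl_inl : ¬ (tanner n a b).Adj (Sum.inl t) (Sum.inl t') := by
  simp [tanner, trel, TV]

lemma tanner_adj_inr_inr : ¬ (tanner n a b).Adj (Sum.inr d) (Sum.inr d') := by
  simp [tanner, trel, TV]

lemma tanner_adj_inl_inr_inl :
    (tanner n a b).Adj (Sum.inl t) (Sum.inr (Sum.inl s)) ↔ coeffZ a (s - t) = 1 := by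
  simp [tanner, trel, TV]

lemma tanner_adj_inl_inr_inr :
    (tanner n a b).Adj (Sum.inl t) (Sum.inr (Sum.inr s)) ↔ coeffZ b (s - t) = 1 := by
  simp [tanner, trel, TV]

lemma tanner_triangle_free (u v w : TV n) (huv : (tanner n a b).Adj u v)
    (hvw : (tanner n a b).Adj v w) : ¬ (tanner n a b).Adj w u := by
  intro hwu
  rcases u with u | u <;> rcases v with v | v <;> rcases w with w | w <;>
    first
    | exact tanner_adj_inl_inl a b _ _ huv
    | exact tanner_adj_inl_inl a b _ _ hvw
    | exact tanner_adj_inl_inl a b _ _ hwu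
    | exact tanner_adj_inr_inr a b _ _ huv
    | exact tanner_adj_inr_inr a b _ _ hvw
    | exact tanner_adj_inr_inr a b _ _ hwu

/-- The Tanner graph has girth `4` iff two distinct checks share two distinct data vertices. -/
lemma tanner_egirth_eq_four_iff :
    (tanner n a b).egirth = 4 ↔ ∃ (t t' : ZMod n) (d d' : ZMod n ⊕ ZMod n), t ≠ t' ∧ d ≠ d' ∧
      (tanner n a b).Adj (Sum.inl t) (Sum.inr d) ∧ (tanner n a b).Adj (Sum.inl t') (Sum.inr d) ∧
      (tanner n a b).Adj (Sum.inl t) (Sum.inr d') ∧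
      (tanner n a b).Adj (Sum.inl t') (Sum.inr d') := by
  rw [SimpleGraph.egirth_eq_four_iff _ (tanner_triangle_free a b)]
  constructor
  · rintro ⟨x | x, y | y, x' | x', y' | y', hx, hy, h₁, h₂, h₃, h₄⟩ <;>
      first
      | exact absurd h₁ (tanner_adj_inl_inl a b _ _)
      | exact absurd h₂ (tanner_adj_inl_inl a b _ _)
      | exact absurd h₃ (tanner_adj_inl_inl a b _ _)
      | exact absurd h₄ (tanner_adj_inl_inl a b _ _)
      | exact absurd h₁ (tanner_adj_inr_inr a b _ _)
      | exact absurd h₂ (tanner_adj_inr_inr a b _ _)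
      | exact absurd h₃ (tanner_adj_inr_inr a b _ _)
      | exact absurd h₄ (tanner_adj_inr_inr a b _ _)
      | exact ⟨x, x', y, y', ne_of_apply_ne _ hx, ne_of_apply_ne _ hy, h₁, h₂, h₃, h₄⟩
      | exact ⟨y, y', x, x', ne_of_apply_ne _ hy, ne_of_apply_ne _ hx,
          h₁.symm, h₃.symm, h₂.symm, h₄.symm⟩
  · rintro ⟨t, t', d, d', ht, hd, h⟩
    exact ⟨_, _, _, _, Sum.inl_injective.ne ht, Sum.inr_injective.ne hd, h⟩

end Tanner

noncomputable section

/-- The Tanner graph `T(a,b)` of a GB code has girth `4` iff one of the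
three listed coefficient conditions holds (indices in `ℤ/n`, coefficients of the
degree-`< n` representatives of `a` and `b`). -/
theorem stmt_15 (n : ℕ) (hn : 0 < n) (a b : R2 n) :
    (tanner n a b).egirth = 4 ↔
      ((∃ i j j' : ZMod n, i ≠ 0 ∧ j ≠ j' ∧
          coeffZ a j = 1 ∧ coeffZ a (j + i) = 1 ∧ coeffZ a j' = 1 ∧ coeffZ a (j' + i) = 1) ∨
       (∃ i j j' : ZMod n, i ≠ 0 ∧ j ≠ j' ∧
          coeffZ b j = 1 ∧ coeffZ b (j + i) = 1 ∧ coeffZ b j' = 1 ∧ coeffZ b (j' + i) = 1) ∨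
       (∃ i j j' : ZMod n, j ≠ j' ∧
          coeffZ a j = 1 ∧ coeffZ b (j + i) = 1 ∧ coeffZ a j' = 1 ∧ coeffZ b (j' + i) = 1)) := by
  have shift (s s' t : ZMod n) : s - t + (s' - s) = s' - t := by ring
  have ne_shift {t t' : ZMod n} (s : ZMod n) (h : t ≠ t') : s - t ≠ s - t' := by simpa using h
  rw [tanner_egirth_eq_four_iff]
  constructor
  · rintro ⟨t, t', s | s, s' | s', ht, hs, h₁, h₂, h₃, h₄⟩ <;>
      simp only [tanner_adj_inl_inr_inl, tanner_adj_inl_inr_inr] at h₁ h₂ h₃ h₄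
    · refine .inl ⟨s' - s, s - t, s - t', sub_ne_zero.2 fun h => hs (by rw [h]), ne_shift s ht,
        h₁, ?_, h₂, ?_⟩ <;> rwa [shift]
    · refine .inr (.inr ⟨s' - s, s - t, s - t', ne_shift s ht, h₁, ?_, h₂, ?_⟩) <;> rwa [shift]
    · refine .inr (.inr ⟨s - s', s' - t, s' - t', ne_shift s' ht, h₃, ?_, h₄, ?_⟩) <;> rwa [shift]
    · refine .inr (.inl ⟨s' - s, s - t, s - t', sub_ne_zero.2 fun h => hs (by rw [h]),
        ne_shift s ht, h₁, ?_, h₂, ?_⟩) <;> rwa [shift]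
  · have unshift (i j : ZMod n) : i - -j = j + i := by ring
    rintro (⟨i, j, j', hi, hj, h₁, h₂, h₃, h₄⟩ | ⟨i, j, j', hi, hj, h₁, h₂, h₃, h₄⟩ |
      ⟨i, j, j', hj, h₁, h₂, h₃, h₄⟩)
    · refine ⟨-j, -j', .inl 0, .inl i, neg_injective.ne hj, Sum.inl_injective.ne hi.symm, ?_⟩
      simp only [tanner_adj_inl_inr_inl, unshift, add_zero]
      exact ⟨h₁, h₃, h₂, h₄⟩
    · refine ⟨-j, -j', .inr 0, .inr i, neg_injective.ne hj, Sum.inr_injective.ne hi.symm, ?_⟩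
      simp only [tanner_adj_inl_inr_inr, unshift, add_zero]
      exact ⟨h₁, h₃, h₂, h₄⟩
    · refine ⟨-j, -j', .inl 0, .inr i, neg_injective.ne hj, Sum.inl_ne_inr, ?_⟩
      simp only [tanner_adj_inl_inr_inl, tanner_adj_inl_inr_inr, unshift, add_zero]
      exact ⟨h₁, h₃, h₂, h₄⟩

end
end

section
/- Let n be a positive integer and a, b ∈ R = 𝔽₂[x]/(xⁿ−1) with coefficient sequences a₀,…,a_{n−1} and b₀,…,b_{n−1} (indices modulo n), and suppose the Tanner graph T(a,b) contains no cycle of length 4. Then T(a,b) has girth equal to 6 if and only if there exist i, j ∈ ℤ_n with i ≢ 0, j ≢ 0, and i + j ≢ 0 (mod n), and indices ℓ, ℓ', ℓ'' ∈ ℤ_n, such that at least one of the following holds: (i) a_ℓ = a_{ℓ+i} = 1, a_{ℓ'} = a_{ℓ'+j} = 1, and a_{ℓ''} = a_{ℓ''+i+j} = 1; (ii) b_ℓ = b_{ℓ+i} = 1, b_{ℓ'} = b_{ℓ'+j} = 1, and b_{ℓ''} = b_{ℓ''+i+j} = 1; (iii) a_ℓ = a_{ℓ+i} = 1, a_{ℓ'}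 = a_{ℓ'+j} = 1, and b_{ℓ''} = b_{ℓ''+i+j} = 1; (iv) b_ℓ = b_{ℓ+i} = 1, b_{ℓ'} = b_{ℓ'+j} = 1, and a_{ℓ''} = a_{ℓ''+i+j} = 1. -/
open Polynomial

noncomputable section

/-- A closed hexagon on six distinct vertices bounds the extended girth by `6`. -/
lemma SimpleGraph.egirth_le_six_of_hexagon {V : Type*} (G : SimpleGraph V)
    {u₁ u₂ u₃ u₄ u₅ u₆ : V} (hnodup : [u₁, u₂, u₃, u₄, u₅, u₆].Nodup)
    (h₁ : G.Adj u₁ u₂) (h₂ : G.Adj u₂ u₃) (h₃ : G.Adj u₃ u₄) (h₄ : G.Adj u₄ u₅)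
    (h₅ : G.Adj u₅ u₆) (h₆ : G.Adj u₆ u₁) : G.egirth ≤ 6 := by
  let p : G.Walk u₂ u₁ := .cons h₂ (.cons h₃ (.cons h₄ (.cons h₅ (.cons h₆ .nil))))
  have hc : (Walk.cons h₁ p).IsCycle := by
    rw [Walk.cons_isCycle_iff]
    simp only [List.nodup_cons, List.mem_cons, List.not_mem_nil, or_false, not_or] at hnodup
    constructor
    · simp [p, Walk.isPath_def]
      grind
    · simp [p]
      grind
  simpa [p] using egirth_le_length hc

namespace Tanner

variable {n : ℕ} (a b : R2 n)

/-- The generator selected by a flag: `a` for `true`, `b` for `false`. -/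
def gen (e : Bool) : R2 n := if e then a else b

/-- The check vertex `x_t`. -/
def check (t : ZMod n) : TV n := Sum.inl t

/-- The data vertex `q_s` (flag `true`) or `q'_s` (flag `false`). -/
def data (e : Bool) (s : ZMod n) : TV n := Sum.inr (if e then Sum.inl s else Sum.inr s)

lemma check_inj {t t' : ZMod n} : check t = check t' ↔ t = t' :=
  Sum.inl_injective.eq_iff

lemma data_inj {e e' : Bool} {s s' : ZMod n} : data e s = data e' s' ↔ e = e' ∧ s = s' := by
  refine Sum.inr_injective.eq_iff.trans ?_
  cases e <;> cases e' <;> simp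

lemma check_ne_data (t : ZMod n) (e : Bool) (s : ZMod n) : check t ≠ data e s :=
  Sum.inl_ne_inr

lemma data_ne_check (t : ZMod n) (e : Bool) (s : ZMod n) : data e s ≠ check t :=
  (check_ne_data t e s).symm

lemma eq_check_or_data (v : TV n) : (∃ t, v = check t) ∨ ∃ e s, v = data e s := by
  rcases v with t | s | s
  · exact .inl ⟨t, rfl⟩
  · exact .inr ⟨true, s, rfl⟩
  · exact .inr ⟨false, s, rfl⟩

lemma trel_iff {v w : TV n} : trel a b v w ↔
    ∃ t e s, v = check t ∧ w = data e s ∧ coeffZ (gen a b e) (s - t) = 1 := by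
  constructor
  · rintro ⟨t, s, rfl, ⟨rfl, h⟩ | ⟨rfl, h⟩⟩
    · exact ⟨t, true, s, rfl, rfl, h⟩
    · exact ⟨t, false, s, rfl, rfl, h⟩
  · rintro ⟨t, _ | _, s, rfl, rfl, h⟩
    · exact ⟨t, s, rfl, .inr ⟨rfl, h⟩⟩
    · exact ⟨t, s, rfl, .inl ⟨rfl, h⟩⟩

lemma adj_check_data {t s : ZMod n} {e : Bool} :
    (tanner n a b).Adj (check t) (data e s) ↔ coeffZ (gen a b e) (s - t) = 1 := by
  simp only [tanner, trel_iff, check_inj, data_inj, check_ne_data, data_ne_check, false_and,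
    and_false, exists_const, or_false]
  constructor
  · rintro ⟨_, _, _, rfl, ⟨rfl, rfl⟩, h⟩
    exact h
  · exact fun h => ⟨_, _, _, rfl, ⟨rfl, rfl⟩, h⟩

lemma adj_data_check {t s : ZMod n} {e : Bool} :
    (tanner n a b).Adj (data e s) (check t) ↔ coeffZ (gen a b e) (s - t) = 1 := by
  rw [SimpleGraph.adj_comm, adj_check_data]

lemma not_adj_check_check (t t' : ZMod n) : ¬ (tanner n a b).Adj (check t) (check t') := by
  simp [tanner, trel, check]

lemma not_adj_data_data (e e' : Bool) (s s' : ZMod n) :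
    ¬ (tanner n a b).Adj (data e s) (data e' s') := by
  simp [tanner, trel, data]

lemma exists_data_of_adj {t : ZMod n} {v : TV n} (h : (tanner n a b).Adj (check t) v) :
    ∃ e s, v = data e s := by
  rcases eq_check_or_data v with ⟨t', rfl⟩ | hv
  · exact absurd h (not_adj_check_check a b t t')
  · exact hv

lemma exists_check_of_adj {e : Bool} {s : ZMod n} {v : TV n}
    (h : (tanner n a b).Adj (data e s) v) : ∃ t, v = check t := by
  rcases eq_check_or_data v with hv | ⟨_, _, rfl⟩
  · exact hv
  · exact absurd h (not_adj_data_data a b _ _ _ _)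

/-- The two-colouring of the Tanner graph by checks and data. -/
def coloring : (tanner n a b).Coloring Bool :=
  SimpleGraph.Coloring.mk Sum.isLeft (by
    rintro (_ | _) (_ | _) h <;> simp_all [tanner, trel])

/-- The coefficient condition with generators `e, e, d` at the three differences. -/
def HasTriangle (e d : Bool) : Prop :=
  ∃ i j : ZMod n, i ≠ 0 ∧ j ≠ 0 ∧ i + j ≠ 0 ∧ ∃ l l' l'' : ZMod n,
    coeffZ (gen a b e) l = 1 ∧ coeffZ (gen a b e) (l + i) = 1 ∧
    coeffZ (gen a b e) l' = 1 ∧ coeffZ (gen a b e) (l' + j) = 1 ∧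
    coeffZ (gen a b d) l'' = 1 ∧ coeffZ (gen a b d) (l'' + i + j) = 1

variable {a b}

lemma egirth_le_six_of_checks {t₁ t₂ t₃ s₁ s₂ s₃ : ZMod n} {e₁ e₂ e₃ : Bool}
    (ht₁₂ : t₁ ≠ t₂) (ht₂₃ : t₂ ≠ t₃) (ht₁₃ : t₁ ≠ t₃)
    (hs₁₂ : data e₁ s₁ ≠ data e₂ s₂) (hs₂₃ : data e₂ s₂ ≠ data e₃ s₃)
    (hs₁₃ : data e₁ s₁ ≠ data e₃ s₃)
    (h₁₁ : coeffZ (gen a b e₁) (s₁ - t₁) = 1) (h₁₂ : coeffZ (gen a b e₁) (s₁ - t₂) = 1)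
    (h₂₂ : coeffZ (gen a b e₂) (s₂ - t₂) = 1) (h₂₃ : coeffZ (gen a b e₂) (s₂ - t₃) = 1)
    (h₃₁ : coeffZ (gen a b e₃) (s₃ - t₁) = 1) (h₃₃ : coeffZ (gen a b e₃) (s₃ - t₃) = 1) :
    (tanner n a b).egirth ≤ 6 := by
  refine SimpleGraph.egirth_le_six_of_hexagon _ (u₁ := check t₁) (u₂ := data e₁ s₁)
    (u₃ := check t₂) (u₄ := data e₂ s₂) (u₅ := check t₃) (u₆ := data e₃ s₃) ?_
    ((adj_check_data a b).2 h₁₁) ((adj_data_check a b).2 h₁₂) ((adj_check_data a b).2 h₂₂)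
    ((adj_data_check a b).2 h₂₃) ((adj_check_data a b).2 h₃₃) ((adj_data_check a b).2 h₃₁)
  simp [check_inj, check_ne_data, data_ne_check, *]

/-- A generator with three distinct exponents already produces a hexagon. -/
lemma egirth_le_six_of_three_coeffs {e : Bool} {l i j : ZMod n} (hi : i ≠ 0) (hj : j ≠ 0)
    (hij : i + j ≠ 0) (h₀ : coeffZ (gen a b e) l = 1) (h₁ : coeffZ (gen a b e) (l + i) = 1)
    (h₂ : coeffZ (gen a b e) (l + i + j) = 1) : (tanner n a b).egirth ≤ 6 := by
  refine egirth_le_six_of_checks (t₁ := 0) (t₂ := -j) (t₃ := -i - j)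
    (s₁ := l + i) (s₂ := l - j) (s₃ := l) (e₁ := e) (e₂ := e) (e₃ := e)
    ?_ ?_ ?_ ?_ ?_ ?_ ?_ ?_ ?_ ?_ ?_ ?_
  · grind
  · grind
  · grind
  · rw [Ne, data_inj]; grind
  · rw [Ne, data_inj]; grind
  · rw [Ne, data_inj]; grind
  · convert h₁ using 2; ring
  · convert h₂ using 2; ring
  · convert h₀ using 2; ring
  · convert h₁ using 2; ring
  · convert h₀ using 2; ring
  · convert h₂ using 2; ring

lemma HasTriangle.egirth_le_six {e d : Bool} (h : HasTriangle a b e d) :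
    (tanner n a b).egirth ≤ 6 := by
  obtain ⟨i, j, hi, hj, hij, l, l', l'', h₁, h₂, h₃, h₄, h₅, h₆⟩ := h
  by_cases hs₁₂ : data e l = data e (l' - i)
  · obtain rfl : l + i = l' := by grind [data_inj]
    exact egirth_le_six_of_three_coeffs hi hj hij h₁ h₂ h₄
  by_cases hs₂₃ : data e (l' - i) = data d l''
  · obtain ⟨rfl, rfl⟩ := data_inj.1 hs₂₃
    refine egirth_le_six_of_three_coeffs hi hj hij h₅ (j := j) ?_ h₆
    rwa [sub_add_cancel]
  by_cases hs₁₃ : data e l = data d l''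
  · obtain ⟨rfl, rfl⟩ := data_inj.1 hs₁₃
    exact egirth_le_six_of_three_coeffs hi hj hij h₁ h₂ h₆
  refine egirth_le_six_of_checks (t₁ := 0) (t₂ := -i) (t₃ := -i - j)
    ?_ ?_ ?_ hs₁₂ hs₂₃ hs₁₃ ?_ ?_ ?_ ?_ ?_ ?_
  · grind
  · grind
  · grind
  · convert h₁ using 2; ring
  · convert h₂ using 2; ring
  · convert h₃ using 2; ring
  · convert h₄ using 2; ring
  · convert h₅ using 2; ring
  · convert h₆ using 2; ring

lemma hasTriangle_of_checks {t₁ t₂ t₃ s₁ s₂ s₃ : ZMod n} {e d : Bool}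
    (ht₁₂ : t₁ ≠ t₂) (ht₂₃ : t₂ ≠ t₃) (ht₁₃ : t₁ ≠ t₃)
    (h₁₁ : coeffZ (gen a b e) (s₁ - t₁) = 1) (h₁₂ : coeffZ (gen a b e) (s₁ - t₂) = 1)
    (h₂₂ : coeffZ (gen a b e) (s₂ - t₂) = 1) (h₂₃ : coeffZ (gen a b e) (s₂ - t₃) = 1)
    (h₃₃ : coeffZ (gen a b d) (s₃ - t₃) = 1) (h₃₁ : coeffZ (gen a b d) (s₃ - t₁) = 1) :
    HasTriangle a b e d := by
  refine ⟨t₁ - t₂, t₂ - t₃, sub_ne_zero.2 ht₁₂, sub_ne_zero.2 ht₂₃, ?_,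
    s₁ - t₁, s₂ - t₂, s₃ - t₁, h₁₁, ?_, h₂₂, ?_, h₃₁, ?_⟩
  · simpa [sub_eq_zero] using ht₁₃
  · simpa using h₁₂
  · simpa using h₂₃
  · simpa using h₃₃

lemma exists_hasTriangle_of_checks {t₁ t₂ t₃ s₁ s₂ s₃ : ZMod n} {e₁ e₂ e₃ : Bool}
    (ht₁₂ : t₁ ≠ t₂) (ht₂₃ : t₂ ≠ t₃) (ht₁₃ : t₁ ≠ t₃)
    (h₁₁ : (tanner n a b).Adj (check t₁) (data e₁ s₁))
    (h₁₂ : (tanner n a b).Adj (data e₁ s₁) (check t₂))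
    (h₂₂ : (tanner n a b).Adj (check t₂) (data e₂ s₂))
    (h₂₃ : (tanner n a b).Adj (data e₂ s₂) (check t₃))
    (h₃₃ : (tanner n a b).Adj (check t₃) (data e₃ s₃))
    (h₃₁ : (tanner n a b).Adj (data e₃ s₃) (check t₁)) :
    ∃ e d, HasTriangle a b e d := by
  simp only [adj_check_data, adj_data_check] at *
  by_cases h : e₁ = e₂
  · subst h
    exact ⟨_, _, hasTriangle_of_checks ht₁₂ ht₂₃ ht₁₃ h₁₁ h₁₂ h₂₂ h₂₃ h₃₃ h₃₁⟩
  by_cases h' : e₂ = e₃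
  · subst h'
    exact ⟨_, _, hasTriangle_of_checks ht₂₃ ht₁₃.symm ht₁₂.symm h₂₂ h₂₃ h₃₃ h₃₁ h₁₁ h₁₂⟩
  obtain rfl : e₃ = e₁ := by revert h h'; cases e₁ <;> cases e₂ <;> cases e₃ <;> simp
  exact ⟨_, _, hasTriangle_of_checks ht₁₃.symm ht₁₂ ht₂₃.symm h₃₃ h₃₁ h₁₁ h₁₂ h₂₂ h₂₃⟩

lemma exists_hasTriangle_of_isCycle {v : TV n} {c : (tanner n a b).Walk v v} (hc : c.IsCycle)
    (hlen : c.length = 6) : ∃ e d, HasTriangle a b e d := by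
  have hadj (k : ℕ) (hk : k < 6) : (tanner n a b).Adj (c.getVert k) (c.getVert (k + 1)) :=
    c.adj_getVert_succ (by omega)
  have hne {k m : ℕ} (hk : k < 6) (hm : m < 6) (hkm : k ≠ m) : c.getVert k ≠ c.getVert m :=
    fun h => hkm (hc.getVert_injOn' (by simp; omega) (by simp; omega) h)
  have h₀ := hadj 0 (by norm_num)
  have h₁ := hadj 1 (by norm_num)
  have h₂ := hadj 2 (by norm_num)
  have h₃ := hadj 3 (by norm_num)
  have h₄ := hadj 4 (by norm_num)
  have h₅ := hadj 5 (by norm_num)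
  have hlast : c.getVert 6 = c.getVert 0 := by
    rw [← hlen, c.getVert_length, c.getVert_zero]
  have h₀₂ := hne (k := 0) (m := 2) (by norm_num) (by norm_num) (by norm_num)
  have h₂₄ := hne (k := 2) (m := 4) (by norm_num) (by norm_num) (by norm_num)
  have h₀₄ := hne (k := 0) (m := 4) (by norm_num) (by norm_num) (by norm_num)
  have h₁₃ := hne (k := 1) (m := 3) (by norm_num) (by norm_num) (by norm_num)
  have h₃₅ := hne (k := 3) (m := 5) (by norm_num) (by norm_num) (by norm_num)
  have h₁₅ := hne (k := 1) (m := 5) (by norm_num) (by norm_num) (by norm_num)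
  norm_num only [hlast] at h₀ h₁ h₂ h₃ h₄ h₅
  clear hadj hne hlast
  generalize c.getVert 0 = v₀, c.getVert 1 = v₁, c.getVert 2 = v₂, c.getVert 3 = v₃,
    c.getVert 4 = v₄, c.getVert 5 = v₅ at *
  rcases eq_check_or_data v₀ with ⟨t, rfl⟩ | ⟨e, s, rfl⟩
  · obtain ⟨_, _, rfl⟩ := exists_data_of_adj a b h₀
    obtain ⟨_, rfl⟩ := exists_check_of_adj a b h₁
    obtain ⟨_, _, rfl⟩ := exists_data_of_adj a b h₂
    obtain ⟨_, rfl⟩ := exists_check_of_adj a b h₃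
    obtain ⟨_, _, rfl⟩ := exists_data_of_adj a b h₄
    rw [Ne, check_inj] at h₀₂ h₂₄ h₀₄
    exact exists_hasTriangle_of_checks h₀₂ h₂₄ h₀₄ h₀ h₁ h₂ h₃ h₄ h₅
  · obtain ⟨_, rfl⟩ := exists_check_of_adj a b h₀
    obtain ⟨_, _, rfl⟩ := exists_data_of_adj a b h₁
    obtain ⟨_, rfl⟩ := exists_check_of_adj a b h₂
    obtain ⟨_, _, rfl⟩ := exists_data_of_adj a b h₃
    obtain ⟨_, rfl⟩ := exists_check_of_adj a b h₄
    rw [Ne, check_inj] at h₁₃ h₃₅ h₁₅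
    exact exists_hasTriangle_of_checks h₁₃ h₃₅ h₁₅ h₁ h₂ h₃ h₄ h₅ h₀

lemma six_le_egirth
    (h4 : ∀ (v : TV n) (c : (tanner n a b).Walk v v), c.IsCycle → c.length ≠ 4) :
    6 ≤ (tanner n a b).egirth := by
  rw [SimpleGraph.le_egirth]
  intro v c hc
  have heven : Even c.length := ((coloring a b).even_length_iff_congr c).2 Iff.rfl
  have h3 := hc.three_le_length
  have h4 := h4 v c hc
  have h6 : 6 ≤ c.length := by
    obtain ⟨k, hk⟩ := heven
    omega
  exact_mod_cast h6

lemma egirth_eq_six_iff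
    (h4 : ∀ (v : TV n) (c : (tanner n a b).Walk v v), c.IsCycle → c.length ≠ 4) :
    (tanner n a b).egirth = 6 ↔ ∃ e d, HasTriangle a b e d := by
  constructor
  · intro h
    have hcyc : ¬ (tanner n a b).IsAcyclic := by
      rw [← SimpleGraph.egirth_eq_top, h]
      exact ENat.natCast_ne_top 6
    obtain ⟨v, c, hc, hlen⟩ := SimpleGraph.exists_egirth_eq_length.2 hcyc
    rw [h] at hlen
    exact exists_hasTriangle_of_isCycle hc (by exact_mod_cast hlen.symm)
  · rintro ⟨e, d, h⟩
    exact le_antisymm h.egirth_le_six (six_le_egirth h4)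

end Tanner

/-- If the Tanner graph `T(a,b)` of a GB code contains no cycle of
length `4`, then it has girth `6` iff one of the four listed coefficient conditions holds
(with `i ≢ 0`, `j ≢ 0`, `i + j ≢ 0 (mod n)`). -/
theorem stmt_16 (n : ℕ) (hn : 0 < n) (a b : R2 n)
    (h4 : ∀ (v : TV n) (c : (tanner n a b).Walk v v), c.IsCycle → c.length ≠ 4) :
    (tanner n a b).egirth = 6 ↔
      ∃ i j : ZMod n, i ≠ 0 ∧ j ≠ 0 ∧ i + j ≠ 0 ∧
        ∃ l l' l'' : ZMod n,
          ((coeffZ a l = 1 ∧ coeffZ a (l + i) = 1 ∧ coeffZ a l' = 1 ∧ coeffZ a (l' + j) = 1 ∧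
              coeffZ a l'' = 1 ∧ coeffZ a (l'' + i + j) = 1) ∨
           (coeffZ b l = 1 ∧ coeffZ b (l + i) = 1 ∧ coeffZ b l' = 1 ∧ coeffZ b (l' + j) = 1 ∧
              coeffZ b l'' = 1 ∧ coeffZ b (l'' + i + j) = 1) ∨
           (coeffZ a l = 1 ∧ coeffZ a (l + i) = 1 ∧ coeffZ a l' = 1 ∧ coeffZ a (l' + j) = 1 ∧
              coeffZ b l'' = 1 ∧ coeffZ b (l'' + i + j) = 1) ∨
           (coeffZ b l = 1 ∧ coeffZ b (l + i) = 1 ∧ coeffZ b l' = 1 ∧ coeffZ b (l' + j) = 1 ∧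
              coeffZ a l'' = 1 ∧ coeffZ a (l'' + i + j) = 1)) := by
  rw [Tanner.egirth_eq_six_iff h4]
  simp only [Bool.exists_bool, Tanner.HasTriangle, Tanner.gen, if_true, Bool.false_eq_true,
    if_false]
  grind

end
end

section
/- Let n ≥ 2 be an integer and let i, j, k ∈ ℤ_n with i ≢ 0 and k ≢ 0 (mod n). Let a = 1 + xⁱ and b = xʲ + x^{j+k} in R = 𝔽₂[x]/(xⁿ−1) (both of weight two). Then the girth of the Tanner graph T(a,b) is at most 8. -/
open Polynomial

noncomputable section

lemma repP_mk_of_degree_lt {n : ℕ} (hn : n ≠ 0) {p : (ZMod 2)[X]} (hp : p.degree < n) :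
    repP (AdjoinRoot.mk (X ^ n - 1 : (ZMod 2)[X]) p) = p := by
  have hm : (X ^ n - 1 : (ZMod 2)[X]).Monic := by
    simpa using monic_X_pow_sub_C (1 : ZMod 2) hn
  have hd : (X ^ n - 1 : (ZMod 2)[X]).degree = n := by
    simpa using degree_X_pow_sub_C (Nat.pos_of_ne_zero hn) (1 : ZMod 2)
  rw [repP, dif_neg hn, AdjoinRoot.modByMonicHom_mk,
    (modByMonic_eq_self_iff hm).2 (by rwa [hd])]

/-- The coefficients of `x^u + x^v`, with exponents taken in `ℤ/n`. -/
lemma coeffZ_xR_pow_add_xR_pow {n : ℕ} [NeZero n] (u v s : ZMod n) :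
    coeffZ (xR n ^ u.val + xR n ^ v.val) s =
      (if s = u then 1 else 0) + (if s = v then 1 else 0) := by
  have hx : xR n ^ u.val + xR n ^ v.val =
      AdjoinRoot.mk (X ^ n - 1 : (ZMod 2)[X]) (X ^ u.val + X ^ v.val) := by
    simp [xR]
  have hd (w : ZMod n) : (X ^ w.val : (ZMod 2)[X]).degree < n := by
    simpa using w.val_lt
  rw [coeffZ, hx, repP_mk_of_degree_lt (NeZero.ne n)
    ((degree_add_le _ _).trans_lt (max_lt (hd u) (hd v)))]
  simp [coeff_X_pow, (ZMod.val_injective n).eq_iff]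

/-- Four check vertices and four distinct data vertices, joined cyclically with each data vertex
having two distinct neighbours on the cycle, bound the girth by `8`, even if check vertices
coincide. -/
lemma SimpleGraph.egirth_le_eight_of_closed_walk {V : Type*} {G : SimpleGraph V}
    {x₁ x₂ x₃ x₄ q₁ q₂ q₃ q₄ : V}
    (h₁ : G.Adj x₁ q₁) (h₁' : G.Adj q₁ x₂) (h₂ : G.Adj x₂ q₂) (h₂' : G.Adj q₂ x₃)
    (h₃ : G.Adj x₃ q₃) (h₃' : G.Adj q₃ x₄) (h₄ : G.Adj x₄ q₄) (h₄' : G.Adj q₄ x₁)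
    (hx : [x₁, x₂, x₃, x₄].Disjoint [q₁, q₂, q₃, q₄]) (hq : [q₁, q₂, q₃, q₄].Nodup)
    (h₁₂ : x₁ ≠ x₂) (h₂₃ : x₂ ≠ x₃) (h₃₄ : x₃ ≠ x₄) (h₄₁ : x₄ ≠ x₁) :
    G.egirth ≤ 8 := by
  let w : G.Walk x₁ x₁ := .cons h₁ <| .cons h₁' <| .cons h₂ <| .cons h₂' <|
    .cons h₃ <| .cons h₃' <| .cons h₄ <| .cons h₄' .nil
  have hw : w.IsCircuit := by
    refine ⟨⟨?_⟩, by simp [w]⟩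
    simp [List.disjoint_left] at hx hq
    simp [w]
    grind
  simpa [w] using hw.egirth_le_length

/-- For `a = 1 + xⁱ` and `b = xʲ + x^{j+k}` of weight two
(`i ≢ 0`, `k ≢ 0 (mod n)`, `n ≥ 2`), the Tanner graph `T(a,b)` has girth at most `8`. -/
theorem stmt_17 (n : ℕ) (hn : 2 ≤ n) (i j k : ZMod n) (hi : i ≠ 0) (hk : k ≠ 0)
    (a b : R2 n) (ha : a = 1 + xR n ^ i.val) (hb : b = xR n ^ j.val + xR n ^ (j + k).val) :
    (tanner n a b).egirth ≤ 8 := by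
  have : NeZero n := ⟨by omega⟩
  have ha' : a = xR n ^ (0 : ZMod n).val + xR n ^ i.val := by simpa using ha
  have a_zero : coeffZ a 0 = 1 := by
    rw [ha', coeffZ_xR_pow_add_xR_pow]; simp [hi.symm]
  have a_i : coeffZ a i = 1 := by
    rw [ha', coeffZ_xR_pow_add_xR_pow]; simp [hi]
  have b_j : coeffZ b j = 1 := by
    rw [hb, coeffZ_xR_pow_add_xR_pow]; simp [hk]
  have b_jk : coeffZ b (j + k) = 1 := by
    rw [hb, coeffZ_xR_pow_add_xR_pow]; simp [hk]
  have adj_q (t s : ZMod n) (h : s - t = 0 ∨ s - t = i) :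
      (tanner n a b).Adj (Sum.inl t : _ ⊕ _) (Sum.inr (Sum.inl s) : _ ⊕ _) :=
    .inl ⟨t, s, rfl, .inl ⟨rfl, by rcases h with h | h <;> rwa [h]⟩⟩
  have adj_q' (t s : ZMod n) (h : s - t = j ∨ s - t = j + k) :
      (tanner n a b).Adj (Sum.inl t : _ ⊕ _) (Sum.inr (Sum.inr s) : _ ⊕ _) :=
    .inl ⟨t, s, rfl, .inr ⟨rfl, by rcases h with h | h <;> rwa [h]⟩⟩
  have inl_ne {s t : ZMod n} (h : s ≠ t) : (Sum.inl s : TV n) ≠ (Sum.inl t : _ ⊕ _) :=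
    fun e => h (Sum.inl_injective e)
  refine SimpleGraph.egirth_le_eight_of_closed_walk
    (adj_q 0 i (by simp)) (adj_q i i (by simp)).symm
    (adj_q' i (i + j + k) (.inr (by ring))) (adj_q' (i + k) (i + j + k) (.inl (by ring))).symm
    (adj_q (i + k) (i + k) (by simp)) (adj_q k (i + k) (by simp)).symm
    (adj_q' k (j + k) (by simp)) (adj_q' 0 (j + k) (by simp)).symm
    ?_ ?_ (inl_ne hi.symm) (inl_ne (by simpa using hk)) (inl_ne (by simpa using hi)) (inl_ne hk)
  · unfold TV; simp [List.disjoint_left]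
  · unfold TV; simp [hk, hi, add_assoc]

end
end

section
/- Let n be a positive integer and let a, b ∈ R = 𝔽₂[x]/(xⁿ−1) each have Hamming weight at least two. Then the girth of the Tanner graph T(a,b) is at most 8. -/
open Polynomial

noncomputable section

/-- A closed walk `c₁ d₁ c₂ d₂ c₃ d₃ c₄ d₄ c₁` alternating between two disjoint sets of vertices
forces girth at most `8` as soon as the `dᵢ` are distinct and consecutive `cᵢ` are distinct:
the remaining `cᵢ` may coincide, since no edge is traversed twice. -/
lemma SimpleGraph.egirth_le_eight_of_alternating_walk {V : Type*} {G : SimpleGraph V}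
    {c₁ c₂ c₃ c₄ d₁ d₂ d₃ d₄ : V}
    (h₁ : G.Adj c₁ d₁) (h₁₂ : G.Adj c₂ d₁) (h₂ : G.Adj c₂ d₂) (h₂₃ : G.Adj c₃ d₂)
    (h₃ : G.Adj c₃ d₃) (h₃₄ : G.Adj c₄ d₃) (h₄ : G.Adj c₄ d₄) (h₄₁ : G.Adj c₁ d₄)
    (hc₁₂ : c₁ ≠ c₂) (hc₂₃ : c₂ ≠ c₃) (hc₃₄ : c₃ ≠ c₄) (hc₄₁ : c₄ ≠ c₁)
    (hd : [d₁, d₂, d₃, d₄].Nodup) (hcd : [c₁, c₂, c₃, c₄].Disjoint [d₁, d₂, d₃, d₄]) :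
    G.egirth ≤ 8 := by
  let w : G.Walk c₁ c₁ :=
    .cons h₁ <| .cons h₁₂.symm <| .cons h₂ <| .cons h₂₃.symm <|
    .cons h₃ <| .cons h₃₄.symm <| .cons h₄ <| .cons h₄₁.symm .nil
  have hw : w.IsCircuit := by
    refine ⟨⟨?_⟩, by simp [w]⟩
    simp only [List.nodup_cons, List.mem_cons, List.not_mem_nil, or_false, not_or,
      List.disjoint_cons_left, List.disjoint_nil_left, and_true] at hd hcd
    simp only [w, Walk.edges_cons, Walk.edges_nil, List.nodup_cons, List.mem_cons,
      List.not_mem_nil, or_false, not_or, Sym2.eq_iff]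
    grind
  simpa [w] using hw.egirth_le_length

lemma coeff_repP_eq_zero_of_le {n : ℕ} (hn : 0 < n) (u : R2 n) {k : ℕ} (hk : n ≤ k) :
    (repP u).coeff k = 0 := by
  have hmon : (X ^ n - 1 : (ZMod 2)[X]).Monic := by
    simpa using monic_X_pow_sub_C (1 : ZMod 2) hn.ne'
  have hdeg : (X ^ n - 1 : (ZMod 2)[X]).degree = n := by
    simpa using degree_X_pow_sub_C hn (1 : ZMod 2)
  obtain ⟨p, rfl⟩ := AdjoinRoot.mk_surjective u
  rw [repP, dif_neg hn.ne', AdjoinRoot.modByMonicHom_mk]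
  refine coeff_eq_zero_of_degree_lt ((degree_modByMonic_lt p hmon).trans_le ?_)
  rw [hdeg]
  exact_mod_cast hk

/-- An element of Hamming weight at least two has two distinct coefficients equal to `1`. -/
lemma exists_coeffZ_eq_one_pair {n : ℕ} (hn : 0 < n) (u : R2 n) (hu : 2 ≤ wt u) :
    ∃ i j : ZMod n, i ≠ j ∧ coeffZ u i = 1 ∧ coeffZ u j = 1 := by
  obtain ⟨i, hi, j, hj, hij⟩ := Finset.one_lt_card.mp hu
  have hlt : ∀ k ∈ (repP u).support, k < n := fun k hk => by
    by_contra h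
    exact mem_support_iff.mp hk (coeff_repP_eq_zero_of_le hn u (not_lt.mp h))
  have hone : ∀ k ∈ (repP u).support, coeffZ u (k : ZMod n) = 1 := fun k hk => by
    rw [coeffZ, ZMod.val_natCast_of_lt (hlt k hk)]
    exact (by decide : ∀ c : ZMod 2, c ≠ 0 → c = 1) _ (mem_support_iff.mp hk)
  refine ⟨i, j, fun h => hij ?_, hone i hi, hone j hj⟩
  have := congrArg ZMod.val h
  rwa [ZMod.val_natCast_of_lt (hlt i hi), ZMod.val_natCast_of_lt (hlt j hj)] at this

lemma tanner_adj_left {n : ℕ} {a b : R2 n} {t s : ZMod n} (h : coeffZ a (s - t) = 1) :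
    (tanner n a b).Adj (Sum.inl t) (Sum.inr (Sum.inl s)) :=
  Or.inl ⟨t, s, rfl, Or.inl ⟨rfl, h⟩⟩

lemma tanner_adj_right {n : ℕ} {a b : R2 n} {t s : ZMod n} (h : coeffZ b (s - t) = 1) :
    (tanner n a b).Adj (Sum.inl t) (Sum.inr (Sum.inr s)) :=
  Or.inl ⟨t, s, rfl, Or.inr ⟨rfl, h⟩⟩

/-- If `a` and `b` both have Hamming weight at least two, then the
Tanner graph `T(a,b)` has girth at most `8`. -/
theorem stmt_18 (n : ℕ) (hn : 0 < n) (a b : R2 n) (ha : 2 ≤ wt a) (hb : 2 ≤ wt b) :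
    (tanner n a b).egirth ≤ 8 := by
  obtain ⟨i, j, hij, hi, hj⟩ := exists_coeffZ_eq_one_pair hn a ha
  obtain ⟨k, l, hkl, hk, hl⟩ := exists_coeffZ_eq_one_pair hn b hb
  have adj_a {s t c : ZMod n} (hc : coeffZ a c = 1) (h : s - t = c) :=
    tanner_adj_left (a := a) (b := b) (h ▸ hc)
  have adj_b {s t c : ZMod n} (hc : coeffZ b c = 1) (h : s - t = c) :=
    tanner_adj_right (a := a) (b := b) (h ▸ hc)
  -- The commutator walk with steps `i, -j, k, -l, j, -i, l, -k` starting at the check `x_0`.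
  refine SimpleGraph.egirth_le_eight_of_alternating_walk
    (adj_a (s := i) (t := 0) hi (by ring))
    (adj_a (t := i - j) hj (by ring))
    (adj_b (s := i - j + k) hk (by ring))
    (adj_b (t := i - j + k - l) hl (by ring))
    (adj_a (s := i + k - l) hj (by ring))
    (adj_a (t := k - l) hi (by ring))
    (adj_b (s := k) hl (by ring))
    (adj_b hk (by ring)) ?_ ?_ ?_ ?_ ?_ ?_ <;>
  unfold TV <;> grind [List.Disjoint]

end
end

section
/- (i) For every odd integer d ≥ 5, with n = (d²+1)/2, the Tanner graph T(1+x, 1+x^d) has girth exactly 8. (ii) For d = 3 (so n = 5), the Tanner graph T(1+x, 1+x³) has girth exactly 6. (iii) For every even integer d ≥ 4, with n = d²/2, the Tanner graph T(1+x, 1+x^{d+1}) has girth exactly 8. (These are the Tanner graphs of the [[d²+1, 2, d]] and [[d², 2, d]] GB code families, so except for the [[10, 2, 3]] code they attain the maximum girth 8 possible for GB codes.) -/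
open Polynomial

noncomputable section
/-- The coefficients of `1 + x^k`, for `0 < k < n`, are supported on `{0, k}`. -/
lemma coeffZ_one_add_xR_pow {n k : ℕ} (hk : 0 < k) (hkn : k < n) (i : ZMod n) :
    coeffZ (1 + xR n ^ k) i = 1 ↔ i = 0 ∨ i = (k : ZMod n) := by
  have hn : n ≠ 0 := by omega
  have : NeZero n := ⟨hn⟩
  have hmonic : (X ^ n - 1 : (ZMod 2)[X]).Monic := by
    simpa using monic_X_pow_sub_C (1 : ZMod 2) hn
  have hmk : (1 + xR n ^ k : R2 n) = AdjoinRoot.mk _ (1 + X ^ k) := by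
    simp [xR]
  have hrep : repP (1 + xR n ^ k : R2 n) = 1 + X ^ k := by
    rw [repP, dif_neg hn, hmk, AdjoinRoot.modByMonicHom_mk, modByMonic_eq_self_iff hmonic]
    have h₁ : (X ^ n - 1 : (ZMod 2)[X]).degree = n := by
      simpa using degree_X_pow_sub_C (R := ZMod 2) (by omega : 0 < n) 1
    have h₂ : (1 + X ^ k : (ZMod 2)[X]).degree = k := by
      have := degree_X_pow_add_C (R := ZMod 2) hk 1
      rwa [map_one, add_comm] at this
    rw [h₁, h₂]
    exact_mod_cast hkn
  have hval : i = (k : ZMod n) ↔ i.val = k := by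
    constructor
    · rintro rfl
      exact ZMod.val_cast_of_lt hkn
    · rintro rfl
      simp
  rw [coeffZ, hrep, coeff_add, coeff_one, coeff_X_pow, hval, ← ZMod.val_eq_zero]
  by_cases h₁ : i.val = 0
  · simp [h₁, hk.ne]
  · by_cases h₂ : i.val = k <;> simp [h₁, h₂, hk.ne']

/-- The check vertex `x_t`. -/
def checkVertex {n : ℕ} (t : ZMod n) : TV n := Sum.inl t

/-- The data vertex `q_s` (for `Sum.inl s`) or `q'_s` (for `Sum.inr s`). -/
def dataVertex {n : ℕ} (y : ZMod n ⊕ ZMod n) : TV n := Sum.inr y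

lemma checkVertex_injective {n : ℕ} : Function.Injective (checkVertex (n := n)) :=
  Sum.inl_injective

lemma dataVertex_injective {n : ℕ} : Function.Injective (dataVertex (n := n)) :=
  Sum.inr_injective

lemma checkVertex_ne_dataVertex {n : ℕ} (t : ZMod n) (y : ZMod n ⊕ ZMod n) :
    checkVertex t ≠ dataVertex y :=
  Sum.inl_ne_inr

lemma not_tanner_adj_check_check {n : ℕ} (a b : R2 n) (t s : ZMod n) :
    ¬ (tanner n a b).Adj (checkVertex t) (checkVertex s) := by
  rintro (⟨_, _, _, ⟨h, _⟩ | ⟨h, _⟩⟩ | ⟨_, _, _, ⟨h, _⟩ | ⟨h, _⟩⟩) <;> cases h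

lemma not_tanner_adj_data_data {n : ℕ} (a b : R2 n) (y z : ZMod n ⊕ ZMod n) :
    ¬ (tanner n a b).Adj (dataVertex y) (dataVertex z) := by
  rintro (⟨_, _, h, _⟩ | ⟨_, _, h, _⟩) <;> cases h

lemma exists_eq_dataVertex_of_adj {n : ℕ} {a b : R2 n} {t : ZMod n} {v : TV n}
    (h : (tanner n a b).Adj (checkVertex t) v) : ∃ y, v = dataVertex y := by
  rcases v with s | y
  · exact (not_tanner_adj_check_check a b t s h).elim
  · exact ⟨y, rfl⟩

lemma exists_eq_checkVertex_of_adj {n : ℕ} {a b : R2 n} {y : ZMod n ⊕ ZMod n} {v : TV n}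
    (h : (tanner n a b).Adj (dataVertex y) v) : ∃ t, v = checkVertex t := by
  rcases v with t | z
  · exact ⟨t, rfl⟩
  · exact (not_tanner_adj_data_data a b y z h).elim

/-- Every cycle of a Tanner graph can be rotated so as to start at a check vertex. -/
lemma exists_isCycle_checkVertex {n : ℕ} {a b : R2 n} {v : TV n} {w : (tanner n a b).Walk v v}
    (hw : w.IsCycle) :
    ∃ t, ∃ w' : (tanner n a b).Walk (checkVertex t) (checkVertex t),
      w'.IsCycle ∧ w'.length = w.length := by
  classical
  rcases v with t | y
  · exact ⟨t, w, hw, rfl⟩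
  · obtain ⟨t, ht⟩ := exists_eq_checkVertex_of_adj (w.adj_snd hw.not_nil)
    have hmem : checkVertex t ∈ w.support := ht ▸ w.getVert_mem_support 1
    exact ⟨t, w.rotate _ hmem, hw.rotate hmem, w.length_rotate _ hmem⟩

/-- `dataLink e t y` says that the check vertex `x_t` is adjacent to the data vertex `y` in
`T(1 + x, 1 + x^e)`. -/
def dataLink {n : ℕ} (e : ZMod n) (t : ZMod n) (y : ZMod n ⊕ ZMod n) : Prop :=
  (∃ s, y = Sum.inl s ∧ (s = t ∨ s = t + 1)) ∨ (∃ s, y = Sum.inr s ∧ (s = t ∨ s = t + e))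

lemma tanner_adj_check_data {n k : ℕ} (hn : 1 < n) (hk : 0 < k) (hkn : k < n)
    (t : ZMod n) (y : ZMod n ⊕ ZMod n) :
    (tanner n (1 + xR n) (1 + xR n ^ k)).Adj (checkVertex t) (dataVertex y) ↔
      dataLink (k : ZMod n) t y := by
  have ha (i : ZMod n) : coeffZ (1 + xR n) i = 1 ↔ i = 0 ∨ i = 1 := by
    simpa using coeffZ_one_add_xR_pow one_pos hn i
  have hb := coeffZ_one_add_xR_pow hk hkn
  have hsub (s c : ZMod n) : s - t = c ↔ s = t + c := by
    rw [sub_eq_iff_eq_add, add_comm]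
  constructor
  · rintro (⟨t', s, h, ⟨hy, hc⟩ | ⟨hy, hc⟩⟩ | ⟨_, _, h, _⟩)
    · cases h
      cases hy
      rw [ha, hsub, hsub, add_zero] at hc
      exact Or.inl ⟨s, rfl, hc⟩
    · cases h
      cases hy
      rw [hb, hsub, hsub, add_zero] at hc
      exact Or.inr ⟨s, rfl, hc⟩
    · cases h
  · rintro (⟨s, rfl, hc⟩ | ⟨s, rfl, hc⟩)
    · refine Or.inl ⟨t, s, rfl, Or.inl ⟨rfl, ?_⟩⟩
      rwa [ha, hsub, hsub, add_zero]
    · refine Or.inl ⟨t, s, rfl, Or.inr ⟨rfl, ?_⟩⟩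
      rwa [hb, hsub, hsub, add_zero]

lemma tanner_adj_data_check {n k : ℕ} (hn : 1 < n) (hk : 0 < k) (hkn : k < n)
    (t : ZMod n) (y : ZMod n ⊕ ZMod n) :
    (tanner n (1 + xR n) (1 + xR n ^ k)).Adj (dataVertex y) (checkVertex t) ↔
      dataLink (k : ZMod n) t y := by
  rw [SimpleGraph.adj_comm, tanner_adj_check_data hn hk hkn]

/-- Two distinct check vertices with a common data neighbour differ by `±1` or `±e`. -/
lemma dataLink.sub_eq {n : ℕ} {e t u : ZMod n} {y : ZMod n ⊕ ZMod n}
    (ht : dataLink e t y) (hu : dataLink e u y) (htu : t ≠ u) :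
    u = t + 1 ∨ t = u + 1 ∨ u = t + e ∨ t = u + e := by
  rcases ht with ⟨s, rfl, h⟩ | ⟨s, rfl, h⟩ <;> rcases hu with ⟨s', hs, h'⟩ | ⟨s', hs, h'⟩ <;>
    cases hs <;> grind

/-- Two distinct check vertices have at most one common data neighbour. -/
lemma dataLink.unique {n : ℕ} {e t u : ZMod n} {y z : ZMod n ⊕ ZMod n}
    (_h2 : (2 : ZMod n) ≠ 0) (h2e : 2 * e ≠ 0) (hadd : 1 + e ≠ 0) (hsub : 1 - e ≠ 0)
    (hty : dataLink e t y) (huy : dataLink e u y) (htz : dataLink e t z) (huz : dataLink e u z)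
    (htu : t ≠ u) : y = z := by
  rcases hty with ⟨s, rfl, h₁⟩ | ⟨s, rfl, h₁⟩ <;>
    rcases huy with ⟨s', hs, h₂⟩ | ⟨s', hs, h₂⟩ <;> cases hs <;>
    rcases htz with ⟨r, rfl, h₃⟩ | ⟨r, rfl, h₃⟩ <;>
    rcases huz with ⟨r', hr, h₄⟩ | ⟨r', hr, h₄⟩ <;> cases hr <;> grind

/-- If no signed sum of three elements of `{1, e}` vanishes, then no three check vertices are
pairwise linked by data vertices. -/
lemma dataLink.no_triangle {n : ℕ} {e t u v : ZMod n} {x y z : ZMod n ⊕ ZMod n}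
    (_h3 : (3 : ZMod n) ≠ 0) (h3e : 3 * e ≠ 0) (h2add : 2 + e ≠ 0) (h2sub : 2 - e ≠ 0)
    (hadd2 : 1 + 2 * e ≠ 0) (hsub2 : 1 - 2 * e ≠ 0)
    (htx : dataLink e t x) (hux : dataLink e u x) (huy : dataLink e u y) (hvy : dataLink e v y)
    (hvz : dataLink e v z) (htz : dataLink e t z) (htu : t ≠ u) (huv : u ≠ v) (hvt : v ≠ t) :
    False := by
  have h₁ := htx.sub_eq hux htu
  have h₂ := huy.sub_eq hvy huv
  have h₃ := hvz.sub_eq htz hvt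
  clear htx hux huy hvy hvz htz
  rcases h₁ with h₁ | h₁ | h₁ | h₁ <;> rcases h₂ with h₂ | h₂ | h₂ | h₂ <;>
    rcases h₃ with h₃ | h₃ | h₃ | h₃ <;> grind

/-- Every cycle of `T(1 + x, 1 + x^k)` has length at least six if no signed sum of two elements
of `{1, k}` vanishes, apart from the trivial ones. -/
lemma six_le_length_of_isCycle {n k : ℕ} (hn : 1 < n) (hk : 0 < k) (hkn : k < n)
    (h2 : (2 : ZMod n) ≠ 0) (h2e : 2 * (k : ZMod n) ≠ 0) (hadd : 1 + (k : ZMod n) ≠ 0)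
    (hsub : 1 - (k : ZMod n) ≠ 0) {t : ZMod n}
    {w : (tanner n (1 + xR n) (1 + xR n ^ k)).Walk (checkVertex t) (checkVertex t)}
    (hw : w.IsCycle) : 6 ≤ w.length := by
  have hcd := tanner_adj_check_data hn hk hkn
  have hdc := tanner_adj_data_check hn hk hkn
  have hcc := not_tanner_adj_check_check (1 + xR n) (1 + xR n ^ k)
  by_contra! hlt
  have h3 := hw.three_le_length
  have hnodup := hw.support_nodup
  clear hw
  rcases w with _ | ⟨e₁, _ | ⟨e₂, w⟩⟩
  · simp at h3
  · simp at h3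
  obtain ⟨y₁, rfl⟩ := exists_eq_dataVertex_of_adj e₁
  obtain ⟨t₁, rfl⟩ := exists_eq_checkVertex_of_adj e₂
  rcases w with _ | ⟨e₃, _ | ⟨e₄, w⟩⟩
  · simp at h3
  · exact hcc _ _ e₃
  obtain ⟨y₂, rfl⟩ := exists_eq_dataVertex_of_adj e₃
  obtain ⟨t₂, rfl⟩ := exists_eq_checkVertex_of_adj e₄
  rcases w with _ | ⟨e₅, _ | ⟨e₆, w⟩⟩
  · rw [hcd] at e₁ e₃
    rw [hdc] at e₂ e₄
    simp only [SimpleGraph.Walk.support_cons, SimpleGraph.Walk.support_nil, List.tail_cons,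
      List.nodup_cons, List.mem_cons, dataVertex_injective.eq_iff,
      checkVertex_injective.eq_iff] at hnodup
    have ht : t ≠ t₁ := by grind
    have hy : y₁ ≠ y₂ := by grind
    exact hy (dataLink.unique h2 h2e hadd hsub e₁ e₂ e₄ e₃ ht)
  · exact hcc _ _ e₅
  · simp at hlt
    omega

/-- A cycle of `T(1 + x, 1 + x^k)` cannot have length six or seven if no signed sum of three
elements of `{1, k}` vanishes. -/
lemma eight_le_length_of_isCycle {n k : ℕ} (hn : 1 < n) (hk : 0 < k) (hkn : k < n)
    (h3 : (3 : ZMod n) ≠ 0) (h3e : 3 * (k : ZMod n) ≠ 0) (h2add : 2 + (k : ZMod n) ≠ 0)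
    (h2sub : 2 - (k : ZMod n) ≠ 0) (hadd2 : 1 + 2 * (k : ZMod n) ≠ 0)
    (hsub2 : 1 - 2 * (k : ZMod n) ≠ 0) {t : ZMod n}
    {w : (tanner n (1 + xR n) (1 + xR n ^ k)).Walk (checkVertex t) (checkVertex t)}
    (hw : w.IsCycle) (h6 : 6 ≤ w.length) : 8 ≤ w.length := by
  have hcd := tanner_adj_check_data hn hk hkn
  have hdc := tanner_adj_data_check hn hk hkn
  have hcc := not_tanner_adj_check_check (1 + xR n) (1 + xR n ^ k)
  by_contra! hlt
  have hnodup := hw.support_nodup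
  clear hw
  rcases w with _ | ⟨e₁, _ | ⟨e₂, w⟩⟩
  · simp at h6
  · simp at h6
  obtain ⟨y₁, rfl⟩ := exists_eq_dataVertex_of_adj e₁
  obtain ⟨t₁, rfl⟩ := exists_eq_checkVertex_of_adj e₂
  rcases w with _ | ⟨e₃, _ | ⟨e₄, w⟩⟩
  · simp at h6
  · simp at h6
  obtain ⟨y₂, rfl⟩ := exists_eq_dataVertex_of_adj e₃
  obtain ⟨t₂, rfl⟩ := exists_eq_checkVertex_of_adj e₄
  rcases w with _ | ⟨e₅, _ | ⟨e₆, w⟩⟩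
  · simp at h6
  · simp at h6
  obtain ⟨y₃, rfl⟩ := exists_eq_dataVertex_of_adj e₅
  obtain ⟨t₃, rfl⟩ := exists_eq_checkVertex_of_adj e₆
  rcases w with _ | ⟨e₇, _ | ⟨e₈, w⟩⟩
  · rw [hcd] at e₁ e₃ e₅
    rw [hdc] at e₂ e₄ e₆
    simp only [SimpleGraph.Walk.support_cons, SimpleGraph.Walk.support_nil, List.tail_cons,
      List.nodup_cons, List.mem_cons, checkVertex_injective.eq_iff] at hnodup
    exact dataLink.no_triangle h3 h3e h2add h2sub hadd2 hsub2 e₁ e₂ e₃ e₄ e₅ e₆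
      (by grind) (by grind) (by grind)
  · exact hcc _ _ e₇
  · simp at hlt
    omega

/-- The cycle of length eight coming from the relation `1 + k - 1 - k = 0`. -/
lemma egirth_tanner_le_eight {n k : ℕ} (hn : 1 < n) (hk : 0 < k) (hkn : k < n)
    (hsub : 1 - (k : ZMod n) ≠ 0) (hadd : 1 + (k : ZMod n) ≠ 0) :
    (tanner n (1 + xR n) (1 + xR n ^ k)).egirth ≤ 8 := by
  have hcd := tanner_adj_check_data hn hk hkn
  have hdc := tanner_adj_data_check hn hk hkn
  have : Fact (1 < n) := ⟨hn⟩
  have h1 : (1 : ZMod n) ≠ 0 := one_ne_zero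
  have hk0 : (k : ZMod n) ≠ 0 := by
    rw [Ne, ZMod.natCast_eq_zero_iff]
    exact Nat.not_dvd_of_pos_of_lt hk hkn
  generalize (k : ZMod n) = e at *
  have e₁ := (hcd 0 (Sum.inl 1)).2 (by simp [dataLink])
  have e₂ := (hdc 1 (Sum.inl 1)).2 (by simp [dataLink])
  have e₃ := (hcd 1 (Sum.inr (1 + e))).2 (by simp [dataLink])
  have e₄ := (hdc (1 + e) (Sum.inr (1 + e))).2 (by simp [dataLink])
  have e₅ := (hcd (1 + e) (Sum.inl (1 + e))).2 (by simp [dataLink])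
  have e₆ := (hdc e (Sum.inl (1 + e))).2 (by simp [dataLink, add_comm])
  have e₇ := (hcd e (Sum.inr e)).2 (by simp [dataLink])
  have e₈ := (hdc 0 (Sum.inr e)).2 (by simp [dataLink])
  have h1e : (1 : ZMod n) ≠ e := sub_ne_zero.1 hsub
  have hcycle : (SimpleGraph.Walk.cons e₁ (.cons e₂ (.cons e₃ (.cons e₄ (.cons e₅ (.cons e₆
      (.cons e₇ (.cons e₈ .nil)))))))).IsCycle := by
    rw [SimpleGraph.Walk.cons_isCycle_iff]
    simp [SimpleGraph.Walk.cons_isPath_iff, checkVertex_injective.eq_iff,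
      dataVertex_injective.eq_iff, checkVertex_ne_dataVertex,
      (checkVertex_ne_dataVertex _ _).symm, h1, h1.symm, hk0, hk0.symm, h1e, hadd]
  exact_mod_cast SimpleGraph.egirth_le_length hcycle

/-- The cycle of length six coming from the relation `1 = k + k`. -/
lemma egirth_tanner_le_six {n k : ℕ} (hn : 1 < n) (hk : 0 < k) (hkn : k < n)
    (hrel : (1 : ZMod n) = k + k) :
    (tanner n (1 + xR n) (1 + xR n ^ k)).egirth ≤ 6 := by
  have hcd := tanner_adj_check_data hn hk hkn
  have hdc := tanner_adj_data_check hn hk hkn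
  have : Fact (1 < n) := ⟨hn⟩
  have h1 : (1 : ZMod n) ≠ 0 := one_ne_zero
  have hk0 : (k : ZMod n) ≠ 0 := by
    rw [Ne, ZMod.natCast_eq_zero_iff]
    exact Nat.not_dvd_of_pos_of_lt hk hkn
  generalize (k : ZMod n) = e at *
  have e₁ := (hcd 0 (Sum.inl 1)).2 (by simp [dataLink])
  have e₂ := (hdc 1 (Sum.inl 1)).2 (by simp [dataLink])
  have e₃ := (hcd 1 (Sum.inr 1)).2 (by simp [dataLink])
  have e₄ := (hdc e (Sum.inr 1)).2 (by simp [dataLink, ← hrel])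
  have e₅ := (hcd e (Sum.inr e)).2 (by simp [dataLink])
  have e₆ := (hdc 0 (Sum.inr e)).2 (by simp [dataLink])
  have h1e : (1 : ZMod n) ≠ e := by
    intro h
    exact hk0 (by simpa [h] using hrel)
  have hcycle : (SimpleGraph.Walk.cons e₁ (.cons e₂ (.cons e₃ (.cons e₄ (.cons e₅ (.cons e₆
      .nil)))))).IsCycle := by
    rw [SimpleGraph.Walk.cons_isCycle_iff]
    simp [SimpleGraph.Walk.cons_isPath_iff, checkVertex_injective.eq_iff,
      dataVertex_injective.eq_iff, checkVertex_ne_dataVertex,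
      (checkVertex_ne_dataVertex _ _).symm, h1, h1.symm, hk0, hk0.symm, h1e]
  exact_mod_cast SimpleGraph.egirth_le_length hcycle

lemma egirth_tanner_eq_eight {n k : ℕ} (hk : 2 < k) (hkn : k + 2 < n)
    (h2k : ¬ n ∣ 2 * k) (h2k_add : ¬ n ∣ 2 * k + 1) (h2k_sub : ¬ n ∣ 2 * k - 1)
    (h3k : ¬ n ∣ 3 * k) : (tanner n (1 + xR n) (1 + xR n ^ k)).egirth = 8 := by
  have hcast {m : ℕ} (hm : ¬ n ∣ m) : (m : ZMod n) ≠ 0 := by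
    rwa [Ne, ZMod.natCast_eq_zero_iff]
  have hcast_lt {m : ℕ} (hm : 0 < m) (hmn : m < n) : (m : ZMod n) ≠ 0 :=
    hcast (Nat.not_dvd_of_pos_of_lt hm hmn)
  have hcast_sub {p q : ℕ} (hpq : p ≤ q) (h : ((q - p : ℕ) : ZMod n) ≠ 0) :
      (p : ZMod n) - q ≠ 0 := by
    rwa [Nat.cast_sub hpq, sub_ne_zero, ne_comm, ← sub_ne_zero] at h
  have hn1 : 1 < n := by omega
  have hk0 : 0 < k := by omega
  have hkn' : k < n := by omega
  have h2 : (2 : ZMod n) ≠ 0 := by simpa using hcast_lt two_pos (by omega)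
  have h3 : (3 : ZMod n) ≠ 0 := by simpa using hcast_lt three_pos (by omega)
  have hadd : 1 + (k : ZMod n) ≠ 0 := by
    simpa using hcast_lt (m := 1 + k) (by omega) (by omega)
  have hsub : 1 - (k : ZMod n) ≠ 0 := by
    simpa using hcast_sub (p := 1) (q := k) (by omega) (hcast_lt (by omega) (by omega))
  have h2e : 2 * (k : ZMod n) ≠ 0 := by simpa using hcast h2k
  have h3e : 3 * (k : ZMod n) ≠ 0 := by simpa using hcast h3k
  have h2add : 2 + (k : ZMod n) ≠ 0 := by
    simpa using hcast_lt (m := 2 + k) (by omega) (by omega)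
  have h2sub : 2 - (k : ZMod n) ≠ 0 := by
    simpa using hcast_sub (p := 2) (q := k) (by omega) (hcast_lt (by omega) (by omega))
  have hadd2 : 1 + 2 * (k : ZMod n) ≠ 0 := by
    simpa [add_comm] using hcast h2k_add
  have hsub2 : 1 - 2 * (k : ZMod n) ≠ 0 := by
    simpa using hcast_sub (p := 1) (q := 2 * k) (by omega) (hcast h2k_sub)
  refine le_antisymm (egirth_tanner_le_eight hn1 hk0 hkn' hsub hadd) ?_
  rw [SimpleGraph.le_egirth]
  intro v w hw
  obtain ⟨t, w', hw', hlen⟩ := exists_isCycle_checkVertex hw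
  rw [← hlen]
  exact_mod_cast eight_le_length_of_isCycle hn1 hk0 hkn' h3 h3e h2add h2sub hadd2 hsub2 hw'
    (six_le_length_of_isCycle hn1 hk0 hkn' h2 h2e hadd hsub hw')

lemma egirth_tanner_five_three : (tanner 5 (1 + xR 5) (1 + xR 5 ^ 3)).egirth = 6 := by
  refine le_antisymm (egirth_tanner_le_six (by norm_num) (by norm_num) (by norm_num) (by decide)) ?_
  rw [SimpleGraph.le_egirth]
  intro v w hw
  obtain ⟨t, w', hw', hlen⟩ := exists_isCycle_checkVertex hw
  rw [← hlen]
  exact_mod_cast six_le_length_of_isCycle (by norm_num) (by norm_num) (by norm_num)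
    (by decide) (by decide) (by decide) (by decide) hw'

/-- (i) For every odd `d ≥ 5` with `2n = d²+1`, the Tanner graph
`T(1+x, 1+x^d)` has girth exactly `8`; (ii) for `d = 3` (so `n = 5`), `T(1+x, 1+x³)` has
girth exactly `6`; (iii) for every even `d ≥ 4` with `2n = d²`, `T(1+x, 1+x^{d+1})` has
girth exactly `8`. -/
theorem stmt_19 :
    (∀ d n : ℕ, Odd d → 5 ≤ d → 2 * n = d ^ 2 + 1 →
      (tanner n (1 + xR n) (1 + xR n ^ d)).egirth = 8) ∧
    (tanner 5 (1 + xR 5) (1 + xR 5 ^ 3)).egirth = 6 ∧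
    (∀ d n : ℕ, Even d → 4 ≤ d → 2 * n = d ^ 2 →
      (tanner n (1 + xR n) (1 + xR n ^ (d + 1))).egirth = 8) := by
  refine ⟨fun d n _ hd hn => ?_, egirth_tanner_five_three, fun d n heven hd hn => ?_⟩
  · have hlt : 2 * d + 1 < n := by nlinarith
    refine egirth_tanner_eq_eight (by omega) (by omega)
      (Nat.not_dvd_of_pos_of_lt (by omega) (by omega))
      (Nat.not_dvd_of_pos_of_lt (by omega) (by omega))
      (Nat.not_dvd_of_pos_of_lt (by omega) (by omega)) ?_
    rcases hd.eq_or_lt with rfl | hd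
    · obtain rfl : n = 13 := by omega
      decide
    · exact Nat.not_dvd_of_pos_of_lt (by omega) (by nlinarith)
  · obtain ⟨m, rfl⟩ := heven
    obtain rfl : n = 2 * m ^ 2 := by nlinarith
    rcases (show 2 ≤ m by omega).eq_or_lt with rfl | hm
    · exact egirth_tanner_eq_eight (by decide) (by decide) (by decide) (by decide) (by decide)
        (by decide)
    have hlt : 2 * (m + m + 1) + 1 < 2 * m ^ 2 := by nlinarith
    refine egirth_tanner_eq_eight (by omega) (by omega)
      (Nat.not_dvd_of_pos_of_lt (by omega) (by omega))
      (Nat.not_dvd_of_pos_of_lt (by omega) (by omega))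
      (Nat.not_dvd_of_pos_of_lt (by omega) (by omega)) ?_
    rcases (show 3 ≤ m by omega).eq_or_lt with rfl | hm
    · decide
    · exact Nat.not_dvd_of_pos_of_lt (by omega) (by nlinarith)

end
end
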